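/- Let 2 < p < 6, 2 < q < 4 and μ > 0. Suppose F_{p,q} is bounded below on the set of u ∈ H¹(ℝ) with ‖u‖₂² = μ and that there exists u₀ in this set with F_{p,q}(u₀) < 0. Then the constrained infimum is attained: there exists u ∈ H¹(ℝ) with ‖u‖₂² = μ such that F_{p,q}(u) ≤ F_{p,q}(v) for every v ∈ H¹(ℝ) with ‖v‖₂² = μ. -/

import Mathlib

open MeasureTheory Real Set

noncomputable section

/-- `u ∈ H¹(ℝ)` with weak derivative `u'`: `u` is continuous, square-integrable,
`u'` is square-integrable, and `u(b) − u(a) = ∫_a^b u'(t) dt` for all `a ≤ b`. -/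
def IsH1 (u u' : ℝ → ℝ) : Prop :=
  Continuous u ∧ Integrable (fun x => (u x) ^ 2) ∧ Integrable (fun x => (u' x) ^ 2) ∧
    ∀ a b : ℝ, a ≤ b → u b - u a = ∫ t in a..b, u' t

/-- The mass `‖u‖₂² = ∫_ℝ u(x)² dx`. -/
def mass (u : ℝ → ℝ) : ℝ := ∫ x, (u x) ^ 2

/-- `D_q(u) = (1/2)∫ u'² − (1/q)|u(0)|^q`. -/
def Dfun (q : ℝ) (u u' : ℝ → ℝ) : ℝ :=
  (1 / 2) * (∫ x, (u' x) ^ 2) - (1 / q) * |u 0| ^ q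

/-- `F_{p,q}(u) = (1/2)∫ u'² − (1/p)∫ |u|^p − (1/q)|u(0)|^q`. -/
def Ffun (p q : ℝ) (u u' : ℝ → ℝ) : ℝ :=
  (1 / 2) * (∫ x, (u' x) ^ 2) - (1 / p) * (∫ x, |u x| ^ p) - (1 / q) * |u 0| ^ q

open Filter Topology

/-- H¹ with measurable weak derivative. -/
def HM (u u' : ℝ → ℝ) : Prop :=
  Continuous u ∧ MemLp u 2 ∧ MemLp u' 2 ∧ ∀ a b : ℝ, u b - u a = ∫ t in a..b, u' t

lemma MemLp.ii {g : ℝ → ℝ} (hg : MemLp g 2) (a b : ℝ) : IntervalIntegrable g volume a b :=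
  ((hg.locallyIntegrable (by norm_num)).integrableOn_isCompact isCompact_uIcc).intervalIntegrable

lemma HM.isH1 {u u' : ℝ → ℝ} (h : HM u u') : IsH1 u u' :=
  ⟨h.1, (memLp_two_iff_integrable_sq h.2.1.1).1 h.2.1, (memLp_two_iff_integrable_sq h.2.2.1.1).1 h.2.2.1,
    fun a b _ => h.2.2.2 a b⟩

lemma IsH1.hm {u u' : ℝ → ℝ} (h : IsH1 u u') (hm : mass u ≠ 0) : HM u u' := by
  obtain ⟨hc, hu, hu', hf⟩ := h
  have hloc : LocallyIntegrable u' volume := by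
    by_contra hnl
    apply hm
    simp only [LocallyIntegrable, not_forall] at hnl
    obtain ⟨x, hx⟩ := hnl
    have key : ∀ a b, a < x → x < b → u b = u a := by
      intro a b ha hb
      have h1 := hf a b (ha.trans hb).le
      rw [intervalIntegral.integral_undef] at h1
      · linarith
      · intro hi
        apply hx
        rw [intervalIntegrable_iff_integrableOn_Ioc_of_le (ha.trans hb).le] at hi
        exact ⟨Ioc a b, Ioc_mem_nhds ha hb, hi⟩
    have hconst : ∀ y, u y = u (x+1) := by
      have h1 : ∀ y, y < x → u y = u (x+1) := fun y hy => (key y (x+1) hy (by linarith)).symm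
      have h2 : ∀ y, x < y → u y = u (x+1) := fun y hy => by
        rw [key (x-1) y (by linarith) hy, key (x-1) (x+1) (by linarith) (by linarith)]
      intro y
      rcases lt_trichotomy y x with hy | hy | hy
      · exact h1 y hy
      · subst hy
        have hh : Tendsto u (𝓝[<] y) (𝓝 (u y)) := (hc.tendsto y).mono_left nhdsWithin_le_nhds
        have hh2 : Tendsto u (𝓝[<] y) (𝓝 (u (y+1))) := by
          apply tendsto_const_nhds.congr'
          filter_upwards [self_mem_nhdsWithin] with z hz
          exact (h1 z hz).symm
        exact tendsto_nhds_unique hh hh2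
      · exact h2 y hy
    have he : (fun y => (u y)^2) = fun _ => (u (x+1))^2 := by
      funext y; rw [hconst y]
    rw [he] at hu
    have hz : u (x+1) = 0 := by
      rw [integrable_const_iff] at hu
      rcases hu with h | h
      · simpa using h
      · exact absurd h.1 (by simp)
    unfold mass
    rw [he, hz]; simp
  have hm1 : AEStronglyMeasurable u' volume := hloc.aestronglyMeasurable
  refine ⟨hc, (memLp_two_iff_integrable_sq hc.aestronglyMeasurable).2 hu, (memLp_two_iff_integrable_sq hm1).2 hu', ?_⟩
  intro a b
  rcases le_total a b with h | h
  · exact hf a b h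
  · rw [intervalIntegral.integral_symm, ← hf b a h]; ring

lemma HM.sq {u u' : ℝ → ℝ} (h : HM u u') : Integrable (fun x => (u x)^2) :=  h.isH1.2.1
lemma HM.sq' {u u' : ℝ → ℝ} (h : HM u u') : Integrable (fun x => (u' x)^2) :=  h.isH1.2.2.1

lemma HM.sub {u u' v v' : ℝ → ℝ} (h : HM u u') (k : HM v v') :
    HM (fun x => u x - v x) (fun x => u' x - v' x) := by
  refine ⟨h.1.sub k.1, h.2.1.sub k.2.1, h.2.2.1.sub k.2.2.1, fun a b => ?_⟩
  rw [intervalIntegral.integral_sub (MemLp.ii h.2.2.1 a b) (MemLp.ii k.2.2.1 a b), ← h.2.2.2, ← k.2.2.2]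
  ring

lemma HM.smul {u u' : ℝ → ℝ} (h : HM u u') (t : ℝ) :
    HM (fun x => t * u x) (fun x => t * u' x) := by
  refine ⟨continuous_const.mul h.1, h.2.1.const_mul t, h.2.2.1.const_mul t, fun a b => ?_⟩
  rw [intervalIntegral.integral_const_mul, ← h.2.2.2]
  ring

lemma HM.trans {u u' : ℝ → ℝ} (h : HM u u') (t : ℝ) :
    HM (fun x => u (x + t)) (fun x => u' (x + t)) := by
  have hmp : MeasurePreserving (fun x : ℝ => x + t) volume volume := measurePreserving_add_right volume t
  refine ⟨h.1.comp (by fun_prop), h.2.1.comp_measurePreserving hmp,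
    h.2.2.1.comp_measurePreserving hmp, fun a b => ?_⟩
  rw [intervalIntegral.integral_comp_add_right, ← h.2.2.2]

lemma HM.holder {u u' : ℝ → ℝ} (h : HM u u') {l : ℝ} (hl : 0 < l) {a b : ℝ} (hab : a ≤ b) :
    |u b - u a| ≤ (l * (∫ x, (u' x)^2) + (b - a) / l) / 2 := by
  rw [h.2.2.2]
  have hi : IntervalIntegrable (fun x => (l * (u' x)^2 + 1 / l)/2) volume a b :=
    (((h.sq'.intervalIntegrable).const_mul l).add intervalIntegrable_const).div_const 2
  calc |∫ t in a..b, u' t| ≤ ∫ t in a..b, |u' t| :=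
        intervalIntegral.abs_integral_le_integral_abs hab
    _ ≤ ∫ t in a..b, (l * (u' t)^2 + 1 / l)/2 := by
        apply intervalIntegral.integral_mono_on hab (MemLp.ii h.2.2.1 a b).abs hi
        intro x _
        have : 0 ≤ (l * |u' x| - 1)^2 / l := by positivity
        have e : (l * |u' x| - 1)^2 / l = l * (u' x)^2 + 1/l - 2 * |u' x| := by
          rw [← sq_abs (u' x)]; field_simp; ring
        linarith
    _ = (l * (∫ x in a..b, (u' x)^2) + (b - a) / l) / 2 := by
        rw [intervalIntegral.integral_div, intervalIntegral.integral_add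
          ((h.sq'.intervalIntegrable).const_mul l) intervalIntegrable_const,
          intervalIntegral.integral_const_mul, intervalIntegral.integral_const]
        simp only [smul_eq_mul]; ring
    _ ≤ _ := by
        have : (∫ x in a..b, (u' x)^2) ≤ ∫ x, (u' x)^2 := by
          rw [intervalIntegral.integral_of_le hab]
          exact setIntegral_le_integral h.sq' (ae_of_all _ fun x => sq_nonneg _)
        gcongr

lemma HM.gn {u u' : ℝ → ℝ} (h : HM u u') {K : ℝ} (hK : 0 < K) (hK' : (∫ x, (u' x)^2) ≤ K) (x : ℝ) :
    |u x| ^ 4 ≤ 16 * K * mass u := by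
  have hm0 : 0 ≤ mass u := integral_nonneg fun x => sq_nonneg _
  by_cases hz : |u x| = 0
  · rw [hz, zero_pow (by norm_num)]; positivity
  have hp : 0 < |u x| := lt_of_le_of_ne (abs_nonneg _) (Ne.symm hz)
  set s := |u x| with hs
  set d := s^2 / (4 * K) with hd
  have hd0 : 0 < d := by positivity
  have low : ∀ y ∈ Icc x (x + d), s^2/4 ≤ (u y)^2 := by
    intro y hy
    have h1 := h.holder (l := s / (2*K)) (by positivity) hy.1
    have h2 : (s / (2*K) * (∫ x, (u' x)^2) + (y - x) / (s / (2*K))) / 2 ≤ s/2 := by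
      have e1 : s / (2*K) * (∫ x, (u' x)^2) ≤ s / (2*K) * K := by gcongr
      have e2 : (y - x) / (s / (2*K)) ≤ d / (s / (2*K)) := by
        gcongr; linarith [hy.2]
      have e3 : s / (2*K) * K = s/2 := by field_simp
      have e4 : d / (s / (2*K)) = s/2 := by rw [hd]; field_simp; norm_num
      linarith
    have h3 : s - |u y| ≤ |u y - u x| := by rw [abs_sub_comm]; exact abs_sub_abs_le_abs_sub _ _
    have h4 : s/2 ≤ |u y| := by linarith
    rw [← sq_abs (u y)]
    nlinarith
  have h5 : (d * (s^2/4)) ≤ ∫ y in Icc x (x+d), (u y)^2 := by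
    have := setIntegral_mono_on (μ := volume) (s := Icc x (x+d)) (f := fun _ => s^2/4) (g := fun y => (u y)^2)
      (by simp) h.sq.integrableOn measurableSet_Icc low
    simpa [hd0.le] using this
  have h6 : (∫ y in Icc x (x+d), (u y)^2) ≤ mass u :=
    setIntegral_le_integral h.sq (ae_of_all _ fun x => sq_nonneg _)
  have h7 : d * (s^2/4) = s^4 / (16 * K) := by rw [hd]; field_simp; norm_num
  have h8 : s^4 / (16 * K) ≤ mass u := by linarith
  rw [div_le_iff₀ (by positivity)] at h8
  linarith

lemma rpow_young {s e : ℝ} (hs : 0 ≤ s) (hs4 : s < 4) (he : 0 < e) :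
    ∃ C : ℝ, ∀ M : ℝ, 0 ≤ M → M ^ s ≤ e * M ^ 4 + C := by
  have ht := (tendsto_rpow_atTop (y := 4 - s) (by linarith)).eventually_ge_atTop (1/e)
  obtain ⟨R, hR⟩ := eventually_atTop.1 ht
  refine ⟨(max R 1) ^ s, fun M hM => ?_⟩
  rcases le_total (max R 1) M with h | h
  · have h1 := hR M ((le_max_left _ _).trans h)
    have hMp : 0 < M := lt_of_lt_of_le one_pos ((le_max_right _ _).trans h)
    have e1 : M ^ 4 = M ^ s * M ^ (4 - s) := by
      rw [← Real.rpow_add hMp, ← Real.rpow_natCast]; norm_num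
    have h2 : 0 ≤ M ^ s := by positivity
    have h3 : 0 ≤ (max R 1) ^ s := by positivity
    have h4 : M ^ s ≤ e * M ^ 4 := by
      rw [e1]
      calc M ^ s = e * (M ^ s * (1 / e)) := by field_simp
        _ ≤ _ := by gcongr
    linarith
  · have : M ^ s ≤ (max R 1) ^ s := Real.rpow_le_rpow hM h hs
    have h3 : 0 ≤ e * M ^ 4 := by positivity
    linarith

lemma HM.lp {u u' : ℝ → ℝ} (h : HM u u') {M p : ℝ} (hp : 2 < p) (hM : ∀ x, |u x| ≤ M) :
    Integrable (fun x => |u x| ^ p) ∧ (∫ x, |u x| ^ p) ≤ M ^ (p - 2) * mass u := by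
  have hb : ∀ x, |u x| ^ p ≤ M ^ (p - 2) * (u x)^2 := by
    intro x
    have : |u x| ^ p = |u x| ^ (p-2) * (u x)^2 := by
      rw [← sq_abs (u x), ← Real.rpow_natCast, ← Real.rpow_add_of_nonneg (abs_nonneg _) (by linarith) (by norm_num)]
      congr 1; norm_num
    rw [this]
    gcongr
    exact hM x
  have hi : Integrable (fun x => |u x| ^ p) := by
    refine (h.sq.const_mul (M^(p-2))).mono' ?_ ?_
    · exact (Continuous.rpow_const h.1.abs (fun x => Or.inr (by linarith))).aestronglyMeasurable
    · refine ae_of_all _ fun x => ?_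
      rw [Real.norm_of_nonneg (by positivity)]
      exact hb x
  refine ⟨hi, ?_⟩
  unfold mass
  rw [← integral_const_mul]
  exact integral_mono hi (h.sq.const_mul _) hb

lemma HM.bdd {u u' : ℝ → ℝ} (h : HM u u') {K : ℝ} (hK' : (∫ x, (u' x)^2) ≤ K) (x : ℝ) :
    |u x| ≤ (16 * (K + 1) * mass u) ^ (1/4 : ℝ) := by
  have hK : 0 ≤ K := (integral_nonneg fun x => sq_nonneg _).trans hK'
  have h1 := h.gn (K := K + 1) (by linarith) (by linarith) x
  have : |u x| = (|u x| ^ 4) ^ (1/4 : ℝ) := by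
    rw [← Real.rpow_natCast, ← Real.rpow_mul (abs_nonneg _)]; norm_num
  rw [this]
  exact Real.rpow_le_rpow (by positivity) h1 (by norm_num)

lemma coercive {p q μ : ℝ} (hp : 2 < p) (hp' : p < 6) (hq : 2 < q) (hq' : q < 4) (hμ : 0 < μ) (B : ℝ) :
    ∃ K0 : ℝ, ∀ u u' : ℝ → ℝ, HM u u' → mass u = μ → Ffun p q u u' ≤ B → (∫ x, (u' x)^2) ≤ K0 := by
  set A := μ / p + 1 / q with hA
  have hA0 : 0 < A := by positivity
  set e := 1 / (64 * μ * A) with he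
  have he0 : 0 < e := by positivity
  obtain ⟨C1, h1⟩ := rpow_young (s := p - 2) (e := e) (by linarith) (by linarith) he0
  obtain ⟨C2, h2⟩ := rpow_young (s := q) (e := e) (by linarith) (by linarith) he0
  refine ⟨4 * (B + 1/4 + μ / p * C1 + 1 / q * C2), fun u u' h hm hF => ?_⟩
  set K := ∫ x, (u' x)^2 with hK
  have hK0 : 0 ≤ K := integral_nonneg fun x => sq_nonneg _
  set M := (16 * (K + 1) * mass u) ^ (1/4 : ℝ) with hM
  have hm0 : 0 ≤ 16 * (K + 1) * mass u := by rw [hm]; positivity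
  have hM0 : 0 ≤ M := by positivity
  have hMb : ∀ x, |u x| ≤ M := h.bdd le_rfl
  have hM4 : M ^ 4 = 16 * (K+1) * μ := by
    rw [hM, ← Real.rpow_natCast, ← Real.rpow_mul hm0, hm]; norm_num
  have a1 := (h.lp hp hMb).2
  have a2 : |u 0| ^ q ≤ M ^ q := Real.rpow_le_rpow (abs_nonneg _) (hMb 0) (by linarith)
  have b1 := h1 M hM0
  have b2 := h2 M hM0
  rw [hm] at a1
  unfold Ffun at hF
  have c1 : 1 / p * (∫ x, |u x| ^ p) ≤ μ / p * (e * M^4 + C1) := by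
    calc 1 / p * (∫ x, |u x| ^ p) ≤ 1 / p * (M ^ (p - 2) * μ) := by gcongr
      _ = μ / p * M ^ (p-2) := by ring
      _ ≤ _ := by gcongr
  have c2 : 1 / q * |u 0| ^ q ≤ 1 / q * (e * M ^ 4 + C2) := by
    gcongr; linarith
  have c3 : A * (e * M ^ 4) = (K+1)/4 := by
    rw [hM4, he]; field_simp; norm_num
  have c4 : A * (e * M ^ 4) = μ / p * (e * M^4) + 1 / q * (e * M^4) := by rw [hA]; ring
  linarith [hF, hK]

lemma Ffun_smul {p q : ℝ} (u u' : ℝ → ℝ) {t : ℝ} (ht : 0 ≤ t) :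
    Ffun p q (fun x => t * u x) (fun x => t * u' x) =
      t^2 * ((1/2) * ∫ x, (u' x)^2) - t ^ p * ((1/p) * ∫ x, |u x| ^ p) - t ^ q * ((1/q) * |u 0| ^ q) := by
  unfold Ffun
  simp only [mul_pow, abs_mul, abs_of_nonneg ht]
  have : ∀ (x r : ℝ), (t * |u x|) ^ r = t ^ r * |u x| ^ r := fun x r => Real.mul_rpow ht (abs_nonneg _)
  simp only [this, integral_const_mul]
  ring

lemma mass_smul (u : ℝ → ℝ) (t : ℝ) : mass (fun x => t * u x) = t^2 * mass u := by
  unfold mass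
  simp only [mul_pow, integral_const_mul]

lemma exists_translate {p q : ℝ} (hq : 2 < q) {u u' : ℝ → ℝ} (h : HM u u') :
    ∃ v v' : ℝ → ℝ, HM v v' ∧ mass v = mass u ∧ Ffun p q v v' ≤ Ffun p q u u' ∧ ∀ x, |v x| ≤ 2 * |v 0| := by
  by_cases hc : ∀ x, |u x| ≤ 2 * |u 0|
  · exact ⟨u, u', h, rfl, le_rfl, hc⟩
  push Not at hc
  obtain ⟨x0, hx0⟩ := hc
  have hb : BddAbove (range fun x => |u x|) := ⟨_, by rintro _ ⟨x, rfl⟩; exact h.bdd le_rfl x⟩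
  set S := ⨆ x, |u x| with hS
  have hS1 : ∀ x, |u x| ≤ S := fun x => le_ciSup hb x
  have hS0 : 0 < S := by linarith [hS1 x0, abs_nonneg (u 0)]
  obtain ⟨y, hy⟩ := exists_lt_of_lt_ciSup (show S/2 < ⨆ x, |u x| by linarith)
  refine ⟨_, _, h.trans y, ?_, ?_, ?_⟩
  · exact integral_add_right_eq_self (fun x => (u x)^2) y
  · unfold Ffun
    rw [integral_add_right_eq_self (fun x => (u' x)^2) y, integral_add_right_eq_self (fun x => |u x|^p) y]
    have : |u 0| ^ q ≤ |u (0 + y)| ^ q := by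
      rw [zero_add]
      apply Real.rpow_le_rpow (abs_nonneg _) _ (by linarith)
      linarith [hS1 x0]
    gcongr
  · intro x
    simp only [zero_add]
    linarith [hS1 (x+y)]

lemma add_rpow_le {p M : ℝ} (hp : 2 < p) {s t : ℝ} (hs : 0 ≤ s) (ht : 0 ≤ t) (hsM : s ≤ M) (htM : t ≤ M) :
    (s + t) ^ p ≤ s ^ p + t ^ p + p * 2 ^ (p-1) * M ^ (p-2) * (s * t) := by
  wlog hst : t ≤ s generalizing s t
  · have := this ht hs htM hsM (le_of_not_ge hst)
    rw [add_comm s t, mul_comm s t]; linarith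
  rcases hs.eq_or_lt with h0 | h0
  · subst h0
    have : t = 0 := le_antisymm hst ht
    subst this
    simp [Real.zero_rpow (show p ≠ 0 by linarith)]
  have hst0 : 0 < s + t := by linarith
  have h1 := one_add_mul_self_le_rpow_one_add (s := - (t / (s+t))) (p := p)
    (by rw [neg_le_neg_iff, div_le_one hst0]; linarith) (by linarith)
  have e1 : 1 + - (t/(s+t)) = s / (s+t) := by field_simp; ring
  rw [e1, Real.div_rpow hs hst0.le, le_div_iff₀ (by positivity)] at h1
  have e2 : (s+t)^p = (s+t) * (s+t)^(p-1) := by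
    rw [Real.rpow_sub_one hst0.ne']; field_simp
  have h2 : (s+t)^p ≤ s^p + p * t * (s+t)^(p-1) := by
    have : (1 + p * -(t/(s+t))) * (s+t)^p = (s+t)^p - p * t * (s+t)^(p-1) := by
      rw [e2]; field_simp; ring
    linarith
  have h3 : (s+t)^(p-1) ≤ 2^(p-1) * (M^(p-2) * s) := by
    calc (s+t)^(p-1) ≤ (2*s)^(p-1) := Real.rpow_le_rpow hst0.le (by linarith) (by linarith)
      _ = 2^(p-1) * (s^(p-2) * s) := by
        rw [Real.mul_rpow (by norm_num) hs]
        congr 1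
        rw [show p - 1 = (p-2) + 1 by ring, Real.rpow_add_one h0.ne']
      _ ≤ _ := by gcongr
  have h4 : 0 ≤ t^p := by positivity
  have h5 : p * t * (s+t)^(p-1) ≤ p * t * (2^(p-1) * (M^(p-2) * s)) := by gcongr
  linarith

lemma cross_tendsto {u : ℝ → ℝ} {w : ℕ → ℝ → ℝ} (hu : MemLp u 2) (hw : ∀ n, MemLp (w n) 2) {B : ℝ}
    (hB : ∀ n, (∫ x, (w n x)^2) ≤ B) (hpt : ∀ x, Tendsto (fun n => w n x) atTop (𝓝 0)) :
    Tendsto (fun n => ∫ x, |u x| * |w n x|) atTop (𝓝 0) := by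
  have hB0 : 0 ≤ B := (integral_nonneg fun x => sq_nonneg _).trans (hB 0)
  have hu2 : Integrable (fun x => (u x)^2) := (memLp_two_iff_integrable_sq hu.1).1 hu
  have hw2 : ∀ n, Integrable (fun x => (w n x)^2) := fun n => (memLp_two_iff_integrable_sq (hw n).1).1 (hw n)
  rw [Metric.tendsto_atTop]
  intro ε hε
  set e := ε / (2 * (B + 1)) with he
  have he0 : 0 < e := by positivity
  set g : ℕ → ℝ → ℝ := fun n x => max 0 (|u x| * |w n x| - e * (w n x)^2) with hg
  have hgm : ∀ n, AEStronglyMeasurable (g n) volume := fun n => by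
    have h1 := hu.1.aemeasurable
    have h2 := (hw n).1.aemeasurable
    exact (aemeasurable_const.max (((continuous_abs.measurable.comp_aemeasurable h1).mul
      (continuous_abs.measurable.comp_aemeasurable h2)).sub ((h2.pow_const 2).const_mul e))).aestronglyMeasurable
  have hgb : ∀ n x, g n x ≤ (1/(4*e)) * (u x)^2 := by
    intro n x
    apply max_le (by positivity)
    have : 0 ≤ (|u x| - 2 * e * |w n x|)^2 / (4*e) := by positivity
    have e1 : (|u x| - 2 * e * |w n x|)^2 / (4*e) = (1/(4*e)) * (u x)^2 - (|u x| * |w n x| - e * (w n x)^2) := by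
      rw [← sq_abs (u x), ← sq_abs (w n x)]; field_simp; ring
    linarith
  have hg0 : ∀ n x, 0 ≤ g n x := fun n x => le_max_left _ _
  have hbi : Integrable (fun x => (1/(4*e)) * (u x)^2) := hu2.const_mul _
  have hgi : ∀ n, Integrable (g n) := fun n => hbi.mono' (hgm n) (ae_of_all _ fun x => by
    rw [Real.norm_of_nonneg (hg0 n x)]; exact hgb n x)
  have hlim : Tendsto (fun n => ∫ x, g n x) atTop (𝓝 (∫ x : ℝ, (0:ℝ))) := by
    refine tendsto_integral_of_dominated_convergence _ hgm hbi (fun n => ae_of_all _ fun x => by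
      rw [Real.norm_of_nonneg (hg0 n x)]; exact hgb n x) (ae_of_all _ fun x => ?_)
    have h1 := hpt x
    have : Tendsto (fun n => max 0 (|u x| * |w n x| - e * (w n x)^2)) atTop (𝓝 (max 0 (|u x| * |(0:ℝ)| - e * (0:ℝ)^2))) :=
      tendsto_const_nhds.max ((tendsto_const_nhds.mul h1.abs).sub (tendsto_const_nhds.mul (h1.pow 2)))
    simpa using this
  rw [integral_zero, Metric.tendsto_atTop] at hlim
  obtain ⟨N, hN⟩ := hlim (ε/2) (by positivity)
  refine ⟨N, fun n hn => ?_⟩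
  have h1 := hN n hn
  rw [Real.dist_eq, sub_zero, abs_of_nonneg (integral_nonneg (hg0 n))] at h1
  rw [Real.dist_eq, sub_zero, abs_of_nonneg (integral_nonneg fun x => by positivity)]
  have h2 : (∫ x, |u x| * |w n x|) ≤ ∫ x, (g n x + e * (w n x)^2) := by
    apply integral_mono_of_nonneg (ae_of_all _ fun x => by positivity) ((hgi n).add ((hw2 n).const_mul e))
    refine ae_of_all _ fun x => ?_
    have := le_max_right 0 (|u x| * |w n x| - e * (w n x)^2)
    simp only [hg, Pi.add_apply]; linarith
  rw [integral_add (hgi n) ((hw2 n).const_mul e), integral_const_mul] at h2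
  have h3 : e * (∫ x, (w n x)^2) ≤ e * (B+1) := by gcongr; linarith [hB n]
  have h4 : e * (B+1) = ε/2 := by rw [he]; field_simp
  linarith

lemma weak_compact {f : ℕ → ℝ → ℝ} (hf : ∀ n, MemLp (f n) 2) {B : ℝ}
    (hB : ∀ n, (∫ x, (f n x)^2) ≤ B) :
    ∃ φ : ℕ → ℕ, StrictMono φ ∧ ∃ g : ℝ → ℝ, MemLp g 2 ∧ ∀ h : ℝ → ℝ, MemLp h 2 →
      Tendsto (fun n => ∫ x, f (φ n) x * h x) atTop (𝓝 (∫ x, g x * h x)) := by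
  have : Fact ((2 : ENNReal) ≠ ⊤) := ⟨by norm_num⟩
  let F : ℕ → Lp ℝ 2 (volume : Measure ℝ) := fun n => (hf n).toLp
  have inner_eq : ∀ (a b : ℝ → ℝ) (ha : MemLp a 2) (hb : MemLp b 2),
      inner ℝ (ha.toLp : Lp ℝ 2 (volume : Measure ℝ)) hb.toLp = ∫ x, a x * b x := by
    intro a b ha hb
    rw [L2.inner_def]
    apply integral_congr_ae
    filter_upwards [ha.coeFn_toLp, hb.coeFn_toLp] with x h1 h2
    rw [h1, h2]; simp [mul_comm]
  have hn : ∀ n, ‖F n‖ ≤ √B := by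
    intro n
    apply Real.le_sqrt_of_sq_le
    rw [← real_inner_self_eq_norm_sq, inner_eq]
    simpa [sq] using hB n
  let L : ℕ → WeakDual ℝ (Lp ℝ 2 (volume : Measure ℝ)) := fun n =>
    StrongDual.toWeakDual (InnerProductSpace.toDual ℝ _ (F n))
  have hL : ∀ n, L n ∈ WeakDual.toStrongDual ⁻¹' Metric.closedBall (0 : StrongDual ℝ (Lp ℝ 2 (volume : Measure ℝ))) (√B) := by
    intro n
    simp only [mem_preimage, mem_closedBall_zero_iff]
    change ‖InnerProductSpace.toDual ℝ _ (F n)‖ ≤ _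
    rw [LinearIsometryEquiv.norm_map]
    exact hn n
  obtain ⟨a, -, φ, hφ, hlim⟩ := WeakDual.isSeqCompact_closedBall ℝ (Lp ℝ 2 (volume : Measure ℝ)) 0 (√B) hL
  obtain ⟨G, hG⟩ := (InnerProductSpace.toDual ℝ (Lp ℝ 2 (volume : Measure ℝ))).surjective (WeakDual.toStrongDual a)
  refine ⟨φ, hφ, G, Lp.memLp G, fun h hh => ?_⟩
  have h1 := ((WeakDual.eval_continuous (𝕜 := ℝ) (hh.toLp : Lp ℝ 2 (volume : Measure ℝ))).tendsto a).comp hlim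
  have e1 : a hh.toLp = ∫ x, G x * h x := by
    have : a hh.toLp = (InnerProductSpace.toDual ℝ (Lp ℝ 2 (volume : Measure ℝ)) G) hh.toLp := by rw [hG]; rfl
    rw [this, InnerProductSpace.toDual_apply_apply, ← inner_eq G h (Lp.memLp G) hh, Lp.toLp_coeFn]
  rw [← e1]
  refine h1.congr fun n => ?_
  change (InnerProductSpace.toDual ℝ (Lp ℝ 2 (volume : Measure ℝ)) (F (φ n))) hh.toLp = _
  rw [InnerProductSpace.toDual_apply_apply, inner_eq]

lemma int_add3 {f g h : ℝ → ℝ} {c : ℝ} (hf : Integrable f) (hg : Integrable g) (hh : Integrable h) :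
    Integrable (fun x => f x + g x + c * h x) ∧
    (∫ x, f x) + (∫ x, g x) + c * (∫ x, h x) = ∫ x, (f x + g x + c * h x) := by
  have h1 : Integrable (fun x => f x + g x) := hf.add hg
  refine ⟨h1.add (hh.const_mul c), ?_⟩
  rw [integral_add h1 (hh.const_mul c), integral_add hf hg, integral_const_mul]

lemma lower_scaled {p q μ J : ℝ} (hp : 2 < p) (hq : 2 < q) (hμ : 0 < μ)
    (hJ : ∀ u u' : ℝ → ℝ, HM u u' → mass u = μ → J ≤ Ffun p q u u')
    {v v' : ℝ → ℝ} (h : HM v v') (hm : mass v ≤ μ) : mass v / μ * J ≤ Ffun p q v v' := by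
  have hm0 : 0 ≤ mass v := integral_nonneg fun x => sq_nonneg _
  have hK0 : 0 ≤ ∫ x, (v' x)^2 := integral_nonneg fun x => sq_nonneg _
  have hP0 : 0 ≤ ∫ x, |v x|^p := integral_nonneg fun x => by positivity
  rcases hm0.eq_or_lt with h0 | h0
  · have hz : ∀ x, v x = 0 := by
      intro x
      have := h.gn (K := (∫ x, (v' x)^2) + 1) (by linarith) (by linarith) x
      rw [← h0, mul_zero] at this
      have h2 : |v x| ^ 4 = 0 := le_antisymm this (by positivity)
      simpa using h2
    rw [← h0]
    unfold Ffun
    simp only [hz, abs_zero, Real.zero_rpow (show p ≠ 0 by linarith), Real.zero_rpow (show q ≠ 0 by linarith)]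
    simp
    positivity
  · set t := √(μ / mass v) with ht
    have ht2 : t ^ 2 = μ / mass v := Real.sq_sqrt (by positivity)
    have ht1 : 1 ≤ t := by
      rw [ht, Real.one_le_sqrt, le_div_iff₀ h0]; linarith
    have h1 := hJ _ _ (h.smul t) (by rw [mass_smul, ht2]; field_simp)
    rw [Ffun_smul _ _ (by linarith)] at h1
    have e1 : t ^ 2 ≤ t ^ p := by
      rw [← Real.rpow_natCast]; exact Real.rpow_le_rpow_of_exponent_le ht1 (by norm_num; linarith)
    have e2 : t ^ 2 ≤ t ^ q := by
      rw [← Real.rpow_natCast]; exact Real.rpow_le_rpow_of_exponent_le ht1 (by norm_num; linarith)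
    have f1 : t^2 * ((1/p) * ∫ x, |v x| ^ p) ≤ t^p * ((1/p) * ∫ x, |v x| ^ p) := by gcongr
    have f2 : t^2 * ((1/q) * |v 0|^q) ≤ t^q * ((1/q) * |v 0| ^ q) := by gcongr
    have h2 : J ≤ t^2 * Ffun p q v v' := by unfold Ffun; linarith
    rw [ht2] at h2
    calc mass v / μ * J ≤ mass v / μ * (μ / mass v * Ffun p q v v') := by gcongr
      _ = _ := by field_simp

lemma tendsto_interval {f : ℕ → ℝ → ℝ} {g : ℝ → ℝ}
    (hfg : ∀ h : ℝ → ℝ, MemLp h 2 → Tendsto (fun n => ∫ x, f n x * h x) atTop (𝓝 (∫ x, g x * h x))) (a b : ℝ) :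
    Tendsto (fun n => ∫ x in a..b, f n x) atTop (𝓝 (∫ x in a..b, g x)) := by
  have key : ∀ a b : ℝ, Tendsto (fun n => ∫ x in Ioc a b, f n x) atTop (𝓝 (∫ x in Ioc a b, g x)) := by
    intro a b
    have h1 := hfg (indicator (Ioc a b) (fun _ => (1:ℝ))) (memLp_indicator_const 2 measurableSet_Ioc 1 (Or.inr (by simp)))
    have e : ∀ k : ℝ → ℝ, (∫ x, k x * indicator (Ioc a b) (fun _ => (1:ℝ)) x) = ∫ x in Ioc a b, k x := by
      intro k
      rw [← integral_indicator measurableSet_Ioc]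
      congr 1; funext x
      by_cases hx : x ∈ Ioc a b <;> simp [hx]
    simpa only [e] using h1
  unfold intervalIntegral
  exact (key a b).sub (key b a)

lemma main_aux {p q μ J : ℝ} (hp : 2 < p) (hp' : p < 6) (hq : 2 < q) (hq' : q < 4) (hμ : 0 < μ)
    (hJ : ∀ u u' : ℝ → ℝ, HM u u' → mass u = μ → J ≤ Ffun p q u u') (hJ0 : J < 0)
    (hseq : ∃ v v' : ℕ → ℝ → ℝ, (∀ n, HM (v n) (v' n)) ∧ (∀ n, mass (v n) = μ) ∧
      Tendsto (fun n => Ffun p q (v n) (v' n)) atTop (𝓝 J)) :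
    ∃ u u' : ℝ → ℝ, HM u u' ∧ mass u = μ ∧ Ffun p q u u' ≤ J := by
  obtain ⟨v0, v0', hv0, hv0m, hv0J⟩ := hseq
  choose v v' hv hvm hvF hvmax using fun n => exists_translate (p := p) hq (hv0 n)
  replace hvm : ∀ n, mass (v n) = μ := fun n => (hvm n).trans (hv0m n)
  have hvJ : Tendsto (fun n => Ffun p q (v n) (v' n)) atTop (𝓝 J) :=
    tendsto_of_tendsto_of_tendsto_of_le_of_le tendsto_const_nhds hv0J (fun n => hJ _ _ (hv n) (hvm n)) hvF
  obtain ⟨B, hB⟩ := hvJ.bddAbove_range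
  obtain ⟨K0, hK0⟩ := coercive hp hp' hq hq' hμ B
  have hvK : ∀ n, (∫ x, (v' n x)^2) ≤ K0 := fun n => hK0 _ _ (hv n) (hvm n) (hB ⟨n, rfl⟩)
  obtain ⟨φ, hφ, g, hg, hgw⟩ := weak_compact (fun n => (hv n).2.2.1) hvK
  set M := (16 * (K0 + 1) * μ) ^ (1/4 : ℝ) with hM
  have hvM : ∀ n x, |v n x| ≤ M := fun n x => by
    have := (hv n).bdd (hvK n) x
    rwa [hvm n] at this
  have hM0 : 0 ≤ M := (abs_nonneg _).trans (hvM 0 0)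
  obtain ⟨c, -, ψ, hψ, hc⟩ := (isCompact_Icc (a := -M) (b := M)).tendsto_subseq
    (x := fun n => v (φ n) 0) (fun n => abs_le.1 (hvM _ _))
  -- the subsequence
  set a : ℕ → ℝ → ℝ := fun n => v (φ (ψ n)) with ha_def
  set a' : ℕ → ℝ → ℝ := fun n => v' (φ (ψ n)) with ha'_def
  have ha : ∀ n, HM (a n) (a' n) := fun n => hv _
  have ham : ∀ n, mass (a n) = μ := fun n => hvm _
  have haM : ∀ n x, |a n x| ≤ M := fun n x => hvM _ _
  have haJ : Tendsto (fun n => Ffun p q (a n) (a' n)) atTop (𝓝 J) := hvJ.comp (hφ.comp hψ).tendsto_atTop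
  have haw : ∀ h : ℝ → ℝ, MemLp h 2 → Tendsto (fun n => ∫ x, a' n x * h x) atTop (𝓝 (∫ x, g x * h x)) :=
    fun h hh => (hgw h hh).comp hψ.tendsto_atTop
  have hac : Tendsto (fun n => a n 0) atTop (𝓝 c) := hc
  have hamax : ∀ n x, |a n x| ≤ 2 * |a n 0| := fun n => hvmax _
  clear_value a a'
  clear hc hgw hvM hvK hB hvJ hvmax hvF hv hvm hv0 hv0m hv0J
  have haK : ∀ n, 0 ≤ ∫ x, (a' n x)^2 := fun n => integral_nonneg fun x => sq_nonneg _
  have haq : Tendsto (fun n => |a n 0| ^ q) atTop (𝓝 (|c| ^ q)) :=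
    hac.abs.rpow_const (Or.inr (by linarith))
  have hc0 : c ≠ 0 := by
    rintro rfl
    have h1 : ∀ n, - (1/p * ((2 * |a n 0|)^(p-2) * μ)) - 1/q * |a n 0|^q ≤ Ffun p q (a n) (a' n) := by
      intro n
      have := ((ha n).lp hp (hamax n)).2
      rw [ham n] at this
      have h2 : 1/p * (∫ x, |a n x|^p) ≤ 1/p * ((2 * |a n 0|)^(p-2) * μ) := by gcongr
      unfold Ffun
      linarith [haK n]
    have h2 : Tendsto (fun n => - (1/p * ((2 * |a n 0|)^(p-2) * μ)) - 1/q * |a n 0|^q) atTop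
        (𝓝 (- (1/p * ((2 * |(0:ℝ)|)^(p-2) * μ)) - 1/q * |(0:ℝ)|^q)) := by
      refine ((((hac.abs.const_mul 2).rpow_const (Or.inr (by linarith))).mul_const μ).const_mul (1/p)).neg.sub
        (haq.const_mul (1/q))
    have h3 := le_of_tendsto_of_tendsto' h2 haJ h1
    simp [Real.zero_rpow (show p - 2 ≠ 0 by linarith), Real.zero_rpow (show q ≠ 0 by linarith)] at h3
    linarith
  -- the limit
  set u : ℝ → ℝ := fun x => c + ∫ t in (0:ℝ)..x, g t with hu_def
  have hu0 : u 0 = c := by simp [hu_def]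
  have hucont : Continuous u := continuous_const.add (intervalIntegral.continuous_primitive (fun a b => MemLp.ii hg a b) 0)
  have hpt : ∀ x, Tendsto (fun n => a n x) atTop (𝓝 (u x)) := by
    intro x
    have h1 := hac.add (tendsto_interval haw 0 x)
    refine h1.congr fun n => ?_
    rw [← (ha n).2.2.2]; ring
  have huM : ∀ x, |u x| ≤ M := fun x => le_of_tendsto' (hpt x).abs (fun n => haM n x)
  have huL : MemLp u 2 := by
    rw [memLp_two_iff_integrable_sq hucont.aestronglyMeasurable]
    refine ⟨(hucont.pow 2).aestronglyMeasurable, ?_⟩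
    rw [hasFiniteIntegral_iff_ofReal (ae_of_all _ fun x => sq_nonneg _)]
    have h1 : ∀ n, (∫⁻ x, ENNReal.ofReal ((a n x)^2)) = ENNReal.ofReal μ := by
      intro n
      rw [← ham n]
      exact (ofReal_integral_eq_lintegral_ofReal (ha n).sq (ae_of_all _ fun x => sq_nonneg _)).symm
    have h2 : ∀ x, liminf (fun n => ENNReal.ofReal ((a n x)^2)) atTop = ENNReal.ofReal ((u x)^2) := fun x =>
      (ENNReal.tendsto_ofReal ((hpt x).pow 2)).liminf_eq
    calc (∫⁻ x, ENNReal.ofReal ((u x)^2)) = ∫⁻ x, liminf (fun n => ENNReal.ofReal ((a n x)^2)) atTop := by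
          simp only [h2]
      _ ≤ liminf (fun n => ∫⁻ x, ENNReal.ofReal ((a n x)^2)) atTop := by
          apply lintegral_liminf_le
          intro n
          exact (((ha n).1.pow 2).measurable).ennreal_ofReal
      _ = ENNReal.ofReal μ := by simp only [h1]; simp
      _ < ⊤ := ENNReal.ofReal_lt_top
  have hu : HM u g := by
    refine ⟨hucont, huL, hg, fun x y => ?_⟩
    have := intervalIntegral.integral_interval_sub_left (MemLp.ii hg 0 y) (MemLp.ii hg 0 x)
    simp only [hu_def]; linarith
  have hg2 := hu.sq'
  set m := mass u with hm_def
  have hm0 : 0 < m := by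
    have hK : 0 ≤ ∫ x, (g x)^2 := integral_nonneg fun x => sq_nonneg _
    have := hu.gn (K := (∫ x, (g x)^2) + 1) (by linarith) (by linarith) 0
    rw [hu0] at this
    have h4 : 0 < |c|^4 := by positivity
    by_contra hneg
    have : 16 * ((∫ x, (g x)^2) + 1) * mass u ≤ 0 :=
      mul_nonpos_of_nonneg_of_nonpos (by linarith) (not_lt.1 hneg)
    linarith
  set w : ℕ → ℝ → ℝ := fun n x => a n x - u x with hw_def
  set w' : ℕ → ℝ → ℝ := fun n x => a' n x - g x with hw'_def
  have hw : ∀ n, HM (w n) (w' n) := fun n => (ha n).sub hu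
  have hwpt : ∀ x, Tendsto (fun n => w n x) atTop (𝓝 0) := fun x => by
    simpa using (hpt x).sub_const (u x)
  have hwB : ∀ n, (∫ x, (w n x)^2) ≤ 2 * μ + 2 * m := by
    intro n
    have : (∫ x, (w n x)^2) ≤ ∫ x, (2 * (a n x)^2 + 2 * (u x)^2) := by
      apply integral_mono (hw n).sq (((ha n).sq.const_mul 2).add (hu.sq.const_mul 2))
      intro x
      simp only [hw_def, Pi.add_apply]
      nlinarith [sq_nonneg (a n x + u x)]
    rw [integral_add ((ha n).sq.const_mul 2) (hu.sq.const_mul 2), integral_const_mul, integral_const_mul] at this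
    have e := ham n
    unfold mass at e
    rw [e] at this
    exact this
  have hX := cross_tendsto huL (fun n => (hw n).2.1) hwB hwpt
  have hXi : ∀ n, Integrable (fun x => |u x| * |w n x|) := fun n => by
    have := (huL.integrable_mul (hw n).2.1).abs
    refine this.congr (ae_of_all _ fun x => ?_)
    simp [abs_mul]
  have huwi : ∀ n, Integrable (fun x => u x * w n x) := fun n => huL.integrable_mul (hw n).2.1
  have hcross : Tendsto (fun n => ∫ x, u x * w n x) atTop (𝓝 0) := by
    apply squeeze_zero_norm _ hX
    intro n
    refine (norm_integral_le_integral_norm _).trans (le_of_eq ?_)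
    simp [abs_mul]
  have hmassw : ∀ n, mass (w n) = μ - m - 2 * ∫ x, u x * w n x := by
    intro n
    have e : mass (a n) = m + mass (w n) + 2 * ∫ x, u x * w n x := by
      simp only [hm_def, mass]
      rw [(int_add3 hu.sq (hw n).sq (huwi n)).2]
      congr 1; funext x
      simp only [hw_def]; ring
    rw [ham n] at e
    linarith
  have hmwlim : Tendsto (fun n => mass (w n)) atTop (𝓝 (μ - m)) := by
    simp only [hmassw]
    simpa using (hcross.const_mul 2).const_sub (μ - m)
  have hmμ : m ≤ μ := by
    have := ge_of_tendsto' hmwlim (fun n => integral_nonneg fun x => sq_nonneg (w n x))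
    linarith
  have hY : Tendsto (fun n => (∫ x, a' n x * g x) - ∫ x, g x * g x) atTop (𝓝 0) := by
    simpa using (haw g hg).sub_const (∫ x, g x * g x)
  have hkin : ∀ n, (∫ x, (a' n x)^2) = (∫ x, (g x)^2) + (∫ x, (w' n x)^2) + 2 * ((∫ x, a' n x * g x) - ∫ x, g x * g x) := by
    intro n
    have i1 : Integrable (fun x => a' n x * g x) := (ha n).2.2.1.integrable_mul hg
    have i2 : Integrable (fun x => g x * g x) := hg.integrable_mul hg
    have i3 : Integrable (fun x => a' n x * g x - g x * g x) := i1.sub i2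
    rw [← integral_sub i1 i2, (int_add3 hg2 (hw n).sq' i3).2]
    congr 1; funext x
    simp only [hw'_def]; ring
  have hwM : ∀ n x, |w n x| ≤ 2 * M := fun n x => by
    have := abs_sub (a n x) (u x)
    have := haM n x; have := huM x
    simp only [hw_def]; linarith
  have huM2 : ∀ x, |u x| ≤ 2 * M := fun x => (huM x).trans (by linarith)
  set C := p * 2 ^ (p-1) * (2 * M) ^ (p-2) with hC
  have hpow : ∀ n, (∫ x, |a n x|^p) ≤ (∫ x, |u x|^p) + (∫ x, |w n x|^p) + C * ∫ x, |u x| * |w n x| := by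
    intro n
    have i1 := (hu.lp hp huM2).1
    have i2 := ((hw n).lp hp (hwM n)).1
    have i3 := ((ha n).lp hp (haM n)).1
    have k := int_add3 (c := C) i1 i2 (hXi n)
    rw [k.2]
    apply integral_mono i3 k.1
    intro x
    refine le_trans ?_ (add_rpow_le hp (abs_nonneg _) (abs_nonneg _) (huM2 x) (hwM n x))
    apply Real.rpow_le_rpow (abs_nonneg _) _ (by linarith)
    have : a n x = u x + w n x := by simp [hw_def]
    rw [this]; exact abs_add_le _ _
  have hfin : Ffun p q u g + (μ - m) / μ * J ≤ J := by
    have hl : Tendsto (fun n => Ffun p q u g + mass (w n) / μ * J + ((∫ x, a' n x * g x) - ∫ x, g x * g x)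
        - 1/p * (C * ∫ x, |u x| * |w n x|) + 1/q * (|c|^q - |a n 0|^q)) atTop
        (𝓝 (Ffun p q u g + (μ - m) / μ * J + 0 - 1/p * (C * 0) + 1/q * (|c|^q - |c|^q))) :=
      ((((((hmwlim.div_const μ).mul_const J).const_add _).add hY).sub ((hX.const_mul C).const_mul (1/p))).add
        ((haq.const_sub _).const_mul (1/q)))
    have hl2 : Ffun p q u g + (μ - m) / μ * J + 0 - 1/p * (C * 0) + 1/q * (|c|^q - |c|^q) ≤ J := by
      refine le_of_tendsto_of_tendsto hl haJ ?_
      filter_upwards [hmwlim.eventually_lt_const (show μ - m < μ by linarith)] with n hn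
      have h1 := lower_scaled hp hq hμ hJ (hw n) hn.le
      have h2 : 1/p * (∫ x, |a n x|^p) ≤ 1/p * ((∫ x, |u x|^p) + (∫ x, |w n x|^p) + C * ∫ x, |u x| * |w n x|) := by
        gcongr; exact hpow n
      have h3 : 0 ≤ 1/q * |w n 0| ^ q := by positivity
      unfold Ffun at h1 ⊢
      rw [hkin n, hu0]
      linarith
    linarith
  have hFm : Ffun p q u g ≤ m / μ * J := by
    have : (μ - m)/μ * J = J - m / μ * J := by field_simp
    linarith
  rcases hmμ.eq_or_lt with he | hlt
  · refine ⟨u, g, hu, he, ?_⟩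
    rw [he, div_self hμ.ne', one_mul] at hFm
    exact hFm
  · exfalso
    set t := √(μ / m) with ht
    have ht2 : t ^ 2 = μ / m := Real.sq_sqrt (by positivity)
    have ht1 : 1 < t := by
      rw [ht, Real.lt_sqrt (by norm_num), lt_div_iff₀ hm0]; linarith
    have h1 := hJ _ _ (hu.smul t) (by rw [mass_smul, ht2, ← hm_def]; field_simp)
    rw [Ffun_smul _ _ (by linarith)] at h1
    have e1 : t ^ 2 ≤ t ^ p := by
      rw [← Real.rpow_natCast]; exact Real.rpow_le_rpow_of_exponent_le ht1.le (by norm_num; linarith)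
    have e2 : t ^ 2 < t ^ q := by
      rw [← Real.rpow_natCast]; exact Real.rpow_lt_rpow_of_exponent_lt ht1 (by norm_num; linarith)
    have hP0 : 0 ≤ ∫ x, |u x|^p := integral_nonneg fun x => by positivity
    have f1 : t^2 * ((1/p) * ∫ x, |u x| ^ p) ≤ t^p * ((1/p) * ∫ x, |u x| ^ p) := by gcongr
    have f2 : t^2 * ((1/q) * |u 0|^q) < t^q * ((1/q) * |u 0| ^ q) := by
      have : 0 < |u 0| := by rw [hu0]; positivity
      gcongr
    have h2 : J < t^2 * Ffun p q u g := by unfold Ffun; linarith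
    rw [ht2] at h2
    have h3 : μ / m * Ffun p q u g ≤ μ / m * (m / μ * J) := by gcongr
    have h4 : μ / m * (m / μ * J) = J := by field_simp
    linarith

theorem stmt15 (p q μ : ℝ) (hp : 2 < p) (hp' : p < 6) (hq : 2 < q) (hq' : q < 4)
    (hμ : 0 < μ)
    (hbdd : ∃ C : ℝ, ∀ u u' : ℝ → ℝ, IsH1 u u' → mass u = μ → C ≤ Ffun p q u u')
    (hneg : ∃ u₀ u₀' : ℝ → ℝ, IsH1 u₀ u₀' ∧ mass u₀ = μ ∧ Ffun p q u₀ u₀' < 0) :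
    ∃ u u' : ℝ → ℝ, IsH1 u u' ∧ mass u = μ ∧
      ∀ v v' : ℝ → ℝ, IsH1 v v' → mass v = μ → Ffun p q u u' ≤ Ffun p q v v' := by
  obtain ⟨C, hC⟩ := hbdd
  obtain ⟨u₀, u₀', hu₀, hm₀, hF₀⟩ := hneg
  set S : Set ℝ := {y | ∃ u u' : ℝ → ℝ, HM u u' ∧ mass u = μ ∧ Ffun p q u u' = y} with hS
  have hbelow : BddBelow S := ⟨C, by
    rintro _ ⟨u, u', h, hm, rfl⟩
    exact hC u u' h.isH1 hm⟩
  have hmem : Ffun p q u₀ u₀' ∈ S := ⟨u₀, u₀', hu₀.hm (by rw [hm₀]; exact hμ.ne'), hm₀, rfl⟩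
  have hJ : ∀ u u' : ℝ → ℝ, HM u u' → mass u = μ → sInf S ≤ Ffun p q u u' :=
    fun u u' h hm => csInf_le hbelow ⟨u, u', h, hm, rfl⟩
  have hJ0 : sInf S < 0 := (csInf_le hbelow hmem).trans_lt hF₀
  obtain ⟨y, -, hy, hyS⟩ := exists_seq_tendsto_sInf ⟨_, hmem⟩ hbelow
  choose v v' hv hvm hvy using hyS
  obtain ⟨u, u', hu, hum, huJ⟩ := main_aux hp hp' hq hq' hμ hJ hJ0
    ⟨v, v', hv, hvm, by simpa only [hvy] using hy⟩
  exact ⟨u, u', hu.isH1, hum, fun w w' hw hwm =>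
    huJ.trans (hJ w w' (hw.hm (by rw [hwm]; exact hμ.ne')) hwm)⟩
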